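/- Let m, k be integers. If either 2k·π₃ ≤ l₁ ≤ (2k+1)·π₃ and (4m−1)·π₃/2 ≤ l₂ ≤ (4m+1)·π₃/2, or (2k+1)·π₃ ≤ l₁ ≤ (2k+2)·π₃ and (4m+1)·π₃/2 ≤ l₂ ≤ (4m+3)·π₃/2, then (c(l₁ + l₂))² = [ (c(l₁)·√(1 − (s(l₂))⁶) − s(l₂)·√(1 − (c(l₁))⁶))² + ((c(l₁))³·s(l₂) − c(l₁)·(s(l₂))³)² ] / ( 1 + 4·(s(l₂))⁴·(c(l₁))² + 4·(s(l₂))²·(c(l₁))⁴ ). -/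

import Mathlib

/-!
Write `p = c'` and `q = s'`. Both solutions have energy one: `p² + c⁶ = 1` and `q² + s⁶ = 1`.

*The sign-free addition formula* (`IsLeaf.addition`). For `c` evaluated at `l - t` and `s` at `t`,
put `N = c² + s² - 2 c⁴ s⁴ + 2 c s p q` and `D = 1 + 4 s⁴ c² + 4 s² c⁴`. The energy relations give
`N' D = N D'`, so `N / D` does not depend on `t`; at `t = 0` it equals `c(l)²`. Modulo the energy
relations `N = (c q + s p)² + (c³ s - c s³)²`.

*The signs*. On each of the two domains `s'(l₂)` and `c'(l₁)` have opposite (weak) signs, so that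
`c q + s p = ±(c √(1 - s⁶) - s √(1 - c⁶))`. To see this, let `K` be the first positive zero of
`s'`. On `(0, K)` the substitution `t = s(l)` turns `∫ dt / √(1 - t⁶)` into `∫ dl`, hence
`K = π₃ / 2` (`IsLeaf.quarter_period`). Uniqueness for the ODE (`IsLeaf.unique`) shows that `s` is
odd, that `c(t) = s(K + t)` and that `c` is even; so `s'(t + 2K) = -s'(t)`, while `s' ≥ 0` on
`[-K, K]`. The signs of `s'`, and of its translate `c'`, follow on all intervals.
-/

open Set

/-- `IsLeaf u v`: the function `u` solves `u'' = -3 u⁵` with derivative `v = u'`, and its conserved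
energy `u'² + u⁶` equals one. -/
structure IsLeaf (u v : ℝ → ℝ) : Prop where
  hu : ∀ t, HasDerivAt u (v t) t
  hv : ∀ t, HasDerivAt v (-3 * u t ^ 5) t
  h0 : v 0 ^ 2 + u 0 ^ 6 = 1

namespace IsLeaf

variable {u v : ℝ → ℝ}

lemma energy (h : IsLeaf u v) (t : ℝ) : v t ^ 2 + u t ^ 6 = 1 := by
  have hd : ∀ x, HasDerivAt (fun x => v x ^ 2 + u x ^ 6) 0 x := fun x =>
    (((h.hv x).pow 2).add ((h.hu x).pow 6)).congr_deriv (by push_cast; ring)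
  have := is_const_of_deriv_eq_zero (fun x => (hd x).differentiableAt) (fun x => (hd x).deriv) t 0
  simpa [h.h0] using this

lemma abs_le_one (h : IsLeaf u v) (t : ℝ) : |u t| ≤ 1 := by
  have := h.energy t
  have h6 : |u t| ^ 6 ≤ 1 := by
    rw [Even.pow_abs (by decide)]; nlinarith [sq_nonneg (v t)]
  exact (pow_le_one_iff_of_nonneg (abs_nonneg _) (by norm_num)).1 h6

lemma abs_deriv_le_one (h : IsLeaf u v) (t : ℝ) : |v t| ≤ 1 := by
  have := h.energy t
  rw [← sq_le_one_iff_abs_le_one]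
  nlinarith [Even.pow_nonneg (show Even 6 by decide) (u t)]

lemma shift (h : IsLeaf u v) (a : ℝ) : IsLeaf (fun t => u (a + t)) (fun t => v (a + t)) where
  hu t := (h.hu (a + t)).comp_const_add a t
  hv t := (h.hv (a + t)).comp_const_add a t
  h0 := h.energy _

lemma reflect (h : IsLeaf u v) : IsLeaf (fun t => u (-t)) (fun t => -v (-t)) where
  hu t := ((h.hu (-t)).comp t (hasDerivAt_neg t)).congr_deriv (by ring)
  hv t := ((h.hv (-t)).comp t (hasDerivAt_neg t)).neg.congr_deriv (by ring)
  h0 := by simpa using h.h0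

lemma neg (h : IsLeaf u v) : IsLeaf (fun t => -u t) (fun t => -v t) where
  hu t := (h.hu t).neg
  hv t := (h.hv t).neg.congr_deriv (by ring)
  h0 := by simpa [Even.neg_pow (show Even 6 by decide)] using h.h0

/-- Uniqueness for the initial value problem. Unit energy confines `(u, u')` to a square, on which
the vector field `(x, y) ↦ (y, -3 x⁵)` is Lipschitz. -/
lemma unique {u₁ v₁ : ℝ → ℝ} (h : IsLeaf u v) (h₁ : IsLeaf u₁ v₁)
    (e : u 0 = u₁ 0) (e' : v 0 = v₁ 0) (t : ℝ) : u t = u₁ t ∧ v t = v₁ t := by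
  let F : ℝ → ℝ × ℝ → ℝ × ℝ := fun _ z => (z.2, -3 * z.1 ^ 5)
  have hF : ∀ t, LipschitzOnWith 15 (F t) {z | |z.1| ≤ 1} := by
    intro t
    refine LipschitzOnWith.of_dist_le_mul fun z hz w hw => ?_
    simp only [mem_ofPred_eq] at hz hw
    simp only [F, Prod.dist_eq, Real.dist_eq, NNReal.coe_ofNat]
    have m1 := le_max_left |z.1 - w.1| |z.2 - w.2|
    have m2 := le_max_right |z.1 - w.1| |z.2 - w.2|
    refine max_le (by nlinarith [abs_nonneg (z.2 - w.2)]) ?_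
    have key : -3 * z.1 ^ 5 - -3 * w.1 ^ 5 = -3 * (z.1 - w.1) *
      (z.1 ^ 4 + z.1 ^ 3 * w.1 + z.1 ^ 2 * w.1 ^ 2 + z.1 * w.1 ^ 3 + w.1 ^ 4) := by ring
    have mono : ∀ i j : ℕ, |z.1 ^ i * w.1 ^ j| ≤ 1 := fun i j => by
      rw [abs_mul, abs_pow, abs_pow]
      exact mul_le_one₀ (pow_le_one₀ (abs_nonneg _) hz) (by positivity)
        (pow_le_one₀ (abs_nonneg _) hw)
    have b : |z.1 ^ 4 + z.1 ^ 3 * w.1 + z.1 ^ 2 * w.1 ^ 2 + z.1 * w.1 ^ 3 + w.1 ^ 4| ≤ 5 := by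
      have a0 := abs_le.1 (mono 4 0)
      have a1 := abs_le.1 (mono 3 1)
      have a2 := abs_le.1 (mono 2 2)
      have a3 := abs_le.1 (mono 1 3)
      have a4 := abs_le.1 (mono 0 4)
      simp only [pow_zero, pow_one, mul_one, one_mul] at a0 a1 a2 a3 a4
      rw [abs_le]
      constructor <;> linarith
    rw [key, abs_mul, abs_mul, show |(-3 : ℝ)| = 3 by norm_num]
    calc 3 * |z.1 - w.1| * _ ≤ 3 * |z.1 - w.1| * 5 := by gcongr
      _ ≤ _ := by linarith
  have := ODE_solution_unique_univ (t₀ := 0) (f := fun t => (u t, v t))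
    (g := fun t => (u₁ t, v₁ t)) hF
    (fun t => ⟨(h.hu t).prodMk (h.hv t), h.abs_le_one t⟩)
    (fun t => ⟨(h₁.hu t).prodMk (h₁.hv t), h₁.abs_le_one t⟩) (by simp [e, e'])
  simpa using congrFun this t

/-- The addition formula in terms of the derivatives, valid for all arguments. -/
lemma addition {s q c p : ℝ → ℝ} (hs : IsLeaf s q) (hc : IsLeaf c p)
    (hs0 : s 0 = 0) (x y : ℝ) :
    c (x + y) ^ 2 = ((c x * q y + s y * p x) ^ 2 + (c x ^ 3 * s y - c x * s y ^ 3) ^ 2) /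
      (1 + 4 * s y ^ 4 * c x ^ 2 + 4 * s y ^ 2 * c x ^ 4) := by
  set l := x + y with hl
  have hcl : ∀ t, HasDerivAt (fun t => c (l - t)) (-p (l - t)) t := fun t =>
    (hc.hu (l - t)).comp_const_sub l t
  have hpl : ∀ t, HasDerivAt (fun t => p (l - t)) (-(-3 * c (l - t) ^ 5)) t := fun t =>
    (hc.hv (l - t)).comp_const_sub l t
  let D : ℝ → ℝ := fun t => 1 + 4 * s t ^ 4 * c (l - t) ^ 2 + 4 * s t ^ 2 * c (l - t) ^ 4
  let N : ℝ → ℝ := fun t => c (l - t) ^ 2 + s t ^ 2 - 2 * (c (l - t) ^ 4 * s t ^ 4)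
    + 2 * (c (l - t) * s t) * (p (l - t) * q t)
  have Dpos : ∀ t, 0 < D t := fun t => by positivity
  have hd : ∀ t, HasDerivAt (fun t => N t / D t) 0 t := by
    intro t
    have dS := hs.hu t
    have dQ := hs.hv t
    have dC := hcl t
    have dP := hpl t
    have e1 := hc.energy (l - t)
    have e2 := hs.energy t
    have hN := (((dC.pow 2).add (dS.pow 2)).sub (((dC.pow 4).mul (dS.pow 4)).const_mul 2)).add
      (((dC.mul dS).const_mul 2).mul (dP.mul dQ))
    have hD := ((((dS.pow 4).const_mul 4).mul (dC.pow 2)).const_add 1).add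
      (((dS.pow 2).const_mul 4).mul (dC.pow 4))
    have hN' : HasDerivAt N _ t := hN.congr_of_eventuallyEq (.of_forall fun z => by simp [N])
    have hD' : HasDerivAt D _ t :=
      hD.congr_of_eventuallyEq (.of_forall fun z => by simp [D, mul_assoc])
    refine (hN'.div hD' (Dpos t).ne').congr_deriv ?_
    rw [div_eq_zero_iff]
    left
    simp only [N, D, Pi.mul_apply, Pi.pow_apply]
    push_cast
    generalize c (l - t) = C at e1 e2 ⊢
    generalize p (l - t) = P at e1 e2 ⊢
    generalize s t = S at e1 e2 ⊢
    generalize q t = Q at e1 e2 ⊢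
    linear_combination (-2 * S * Q * (1 + 4 * S ^ 4 * C ^ 2 + 4 * S ^ 2 * C ^ 4)
        + 16 * C ^ 2 * S ^ 3 * Q * (S ^ 2 + 2 * C ^ 2)) * e1
      + (2 * C * P * (1 + 4 * S ^ 4 * C ^ 2 + 4 * S ^ 2 * C ^ 4)
        - 16 * C ^ 3 * S ^ 2 * P * (2 * S ^ 2 + C ^ 2)) * e2
  have := is_const_of_deriv_eq_zero (fun t => (hd t).differentiableAt) (fun t => (hd t).deriv) 0 y
  have hxy : l - y = x := by rw [hl]; ring
  simp only [N, D, hs0, hxy, sub_zero] at this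
  have e : c x ^ 2 + s y ^ 2 - 2 * (c x ^ 4 * s y ^ 4) + 2 * (c x * s y) * (p x * q y) =
      (c x * q y + s y * p x) ^ 2 + (c x ^ 3 * s y - c x * s y ^ 3) ^ 2 := by
    linear_combination -(s y ^ 2) * hc.energy x - c x ^ 2 * hs.energy y
  rw [← e, ← this]
  simp

/-- Otherwise `u` increases on `[0, ∞)`, so `u'' ≤ -3 u(1)⁵ < 0` on `[1, ∞)`, which eventually
forces `u'` below zero. -/
lemma exists_deriv_zero (h : IsLeaf u v) (h0 : u 0 = 0) (h1 : v 0 = 1) :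
    ∃ t, 0 ≤ t ∧ v t = 0 := by
  by_contra! hne
  have hvc : Continuous v := continuous_iff_continuousAt.2 fun t => (h.hv t).continuousAt
  have huc : Continuous u := continuous_iff_continuousAt.2 fun t => (h.hu t).continuousAt
  have hpos : ∀ t, 0 ≤ t → 0 < v t := by
    intro t ht
    by_contra! hle
    obtain ⟨z, hz, hz0⟩ := intermediate_value_Icc' ht hvc.continuousOn
      (show (0 : ℝ) ∈ Icc (v t) (v 0) from ⟨hle, by rw [h1]; norm_num⟩)
    exact hne z hz.1 hz0
  have hmono : StrictMonoOn u (Ici 0) := by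
    refine strictMonoOn_of_deriv_pos (convex_Ici 0) huc.continuousOn fun x hx => ?_
    rw [(h.hu x).deriv]
    rw [interior_Ici] at hx
    exact hpos x (le_of_lt hx)
  have hu1 : 0 < u 1 := by
    simpa [h0] using hmono (show (0 : ℝ) ∈ Ici 0 by simp) (show (1 : ℝ) ∈ Ici 0 by simp) one_pos
  set d := 3 * u 1 ^ 5 with hd
  have hdpos : 0 < d := by positivity
  have hT : (1 : ℝ) < 1 + 1 / d := by linarith [one_div_pos.2 hdpos]
  obtain ⟨z, hz, hzeq⟩ := exists_hasDerivAt_eq_slope v (fun t => -3 * u t ^ 5) hT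
    hvc.continuousOn (fun t _ => h.hv t)
  have huz : u 1 ≤ u z := hmono.monotoneOn (by simp) (by simp; linarith [hz.1]) hz.1.le
  have hz5 : u 1 ^ 5 ≤ u z ^ 5 := by gcongr
  rw [add_sub_cancel_left, eq_div_iff (by positivity)] at hzeq
  have : -3 * u z ^ 5 * (1 / d) ≤ -1 := by
    rw [mul_one_div, div_le_iff₀ hdpos]; linarith
  have h2 := hpos (1 + 1 / d) (by linarith)
  have h3 := (abs_le.1 (h.abs_deriv_le_one 1)).2
  linarith

/-- The first positive zero of `u'` is `∫₀¹ dt / √(1 - t⁶)`, and `u` takes the value one there. -/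
lemma quarter_period (h : IsLeaf u v) (h0 : u 0 = 0) (h1 : v 0 = 1) (K : ℝ)
    (hK : K = ∫ t in (0 : ℝ)..1, 1 / Real.sqrt (1 - t ^ 6)) :
    u K = 1 ∧ v K = 0 ∧ ∀ t ∈ Icc 0 K, 0 ≤ v t := by
  have hvc : Continuous v := continuous_iff_continuousAt.2 fun t => (h.hv t).continuousAt
  have huc : Continuous u := continuous_iff_continuousAt.2 fun t => (h.hu t).continuousAt
  let Z : Set ℝ := {t | 0 ≤ t ∧ v t = 0}
  have Zne : Z.Nonempty := h.exists_deriv_zero h0 h1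
  have Zcl : IsClosed Z := isClosed_Ici.inter (isClosed_eq hvc continuous_const)
  have Zbd : BddBelow Z := ⟨0, fun t ht => ht.1⟩
  obtain ⟨hb0, hvb⟩ : sInf Z ∈ Z := Zcl.csInf_mem Zne Zbd
  set b := sInf Z with hbdef
  have hbpos : 0 < b := by
    refine lt_of_le_of_ne hb0 fun e => ?_
    rw [← e, h1] at hvb
    exact one_ne_zero hvb
  have hpos : ∀ t, 0 ≤ t → t < b → 0 < v t := by
    intro t ht htb
    by_contra! hle
    obtain ⟨z, hz, hz0⟩ := intermediate_value_Icc' ht hvc.continuousOn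
      (show (0 : ℝ) ∈ Icc (v t) (v 0) from ⟨hle, by rw [h1]; norm_num⟩)
    have : b ≤ z := csInf_le Zbd ⟨hz.1, hz0⟩
    linarith [hz.2]
  have hmono : StrictMonoOn u (Icc 0 b) := by
    refine strictMonoOn_of_deriv_pos (convex_Icc 0 b) huc.continuousOn fun x hx => ?_
    rw [(h.hu x).deriv]
    rw [interior_Icc] at hx
    exact hpos x hx.1.le hx.2
  have hub : u b = 1 := by
    have e := h.energy b
    have hp : 0 < u b := by
      simpa [h0] using hmono (left_mem_Icc.2 hb0) (right_mem_Icc.2 hb0) hbpos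
    rw [hvb] at e
    exact (pow_eq_one_iff_of_nonneg hp.le (by norm_num : 6 ≠ 0)).1 (by linarith)
  have himg : u '' Ioo 0 b = Ioo 0 1 := by
    apply Subset.antisymm
    · rintro _ ⟨t, ht, rfl⟩
      constructor
      · simpa [h0] using hmono (left_mem_Icc.2 hb0) (Ioo_subset_Icc_self ht) ht.1
      · simpa [hub] using hmono (Ioo_subset_Icc_self ht) (right_mem_Icc.2 hb0) ht.2
    · simpa [h0, hub] using intermediate_value_Ioo hb0 huc.continuousOn
  have hKb : K = b := by
    rw [hK, intervalIntegral.integral_of_le zero_le_one,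
      MeasureTheory.integral_Ioc_eq_integral_Ioo, ← himg,
      MeasureTheory.integral_image_eq_integral_abs_deriv_smul measurableSet_Ioo
        (fun x _ => (h.hu x).hasDerivWithinAt)
        (hmono.injOn.mono Ioo_subset_Icc_self)]
    -- `√(1 - u⁶) = |u'|`, so the new integrand is identically one
    have : ∀ x ∈ Ioo 0 b, |v x| • (1 / Real.sqrt (1 - u x ^ 6)) = 1 := by
      intro x hx
      have hv := hpos x hx.1.le hx.2
      rw [show 1 - u x ^ 6 = v x ^ 2 by linarith [h.energy x], Real.sqrt_sq_eq_abs, smul_eq_mul,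
        mul_one_div, div_self (abs_ne_zero.2 hv.ne')]
    rw [MeasureTheory.setIntegral_congr_fun measurableSet_Ioo this]
    simp [hb0]
  rw [hKb]
  refine ⟨hub, hvb, fun t ht => ?_⟩
  rcases ht.2.lt_or_eq with hlt | rfl
  · exact (hpos t ht.1 hlt).le
  · exact hvb.ge

end IsLeaf

theorem stmt_16 (s c : ℝ → ℝ)
    (hs : Differentiable ℝ s) (hs' : Differentiable ℝ (deriv s))
    (hsode : ∀ l : ℝ, deriv (deriv s) l = -3 * s l ^ 5)
    (hs0 : s 0 = 0) (hs1 : deriv s 0 = 1)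
    (hc : Differentiable ℝ c) (hc' : Differentiable ℝ (deriv c))
    (hcode : ∀ l : ℝ, deriv (deriv c) l = -3 * c l ^ 5)
    (hc0 : c 0 = 1) (hc1 : deriv c 0 = 0)
    (π₃ : ℝ) (hπ₃ : π₃ = 2 * ∫ t in (0 : ℝ)..1, 1 / Real.sqrt (1 - t ^ 6))
    (m k : ℤ) (l₁ l₂ : ℝ)
    (hdom :
      (2 * (k : ℝ) * π₃ ≤ l₁ ∧ l₁ ≤ (2 * (k : ℝ) + 1) * π₃ ∧
        (4 * (m : ℝ) - 1) * π₃ / 2 ≤ l₂ ∧ l₂ ≤ (4 * (m : ℝ) + 1) * π₃ / 2) ∨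
      ((2 * (k : ℝ) + 1) * π₃ ≤ l₁ ∧ l₁ ≤ (2 * (k : ℝ) + 2) * π₃ ∧
        (4 * (m : ℝ) + 1) * π₃ / 2 ≤ l₂ ∧ l₂ ≤ (4 * (m : ℝ) + 3) * π₃ / 2)) :
    (c (l₁ + l₂)) ^ 2 =
      ((c l₁ * Real.sqrt (1 - (s l₂) ^ 6) - s l₂ * Real.sqrt (1 - (c l₁) ^ 6)) ^ 2
          + ((c l₁) ^ 3 * s l₂ - c l₁ * (s l₂) ^ 3) ^ 2) /
        (1 + 4 * (s l₂) ^ 4 * (c l₁) ^ 2 + 4 * (s l₂) ^ 2 * (c l₁) ^ 4) := by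
  have Ls : IsLeaf s (deriv s) :=
    ⟨fun t => (hs t).hasDerivAt, fun t => hsode t ▸ (hs' t).hasDerivAt, by simp [hs0, hs1]⟩
  have Lc : IsLeaf c (deriv c) :=
    ⟨fun t => (hc t).hasDerivAt, fun t => hcode t ▸ (hc' t).hasDerivAt, by simp [hc0, hc1]⟩
  obtain ⟨K, hK⟩ : ∃ K, K = ∫ t in (0 : ℝ)..1, 1 / Real.sqrt (1 - t ^ 6) := ⟨_, rfl⟩
  rw [← hK] at hπ₃
  subst hπ₃
  obtain ⟨hsK, hqK, hnn⟩ := Ls.quarter_period hs0 hs1 K hK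
  generalize deriv s = q at *
  generalize deriv c = p at *
  have q_even : ∀ t, q (-t) = q t := fun t => by
    simpa using (Ls.reflect.neg.unique Ls (by simp [hs0]) (by simp) t).2
  have p_odd : ∀ t, p (-t) = -p t := fun t => by
    have := (Lc.reflect.unique Lc (by simp) (by simp [hc1]) t).2
    linarith
  have p_eq : ∀ t, p t = q (K + t) := fun t =>
    (Lc.unique (Ls.shift K) (by simp [hc0, hsK]) (by simp [hc1, hqK]) t).2
  have q_half : ∀ t, q (t + 2 * K) = -q t := fun t => by
    have e1 := p_eq (K + t)
    have e2 := p_eq (-(K + t))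
    rw [p_odd, e1, show K + -(K + t) = -t by ring, q_even,
      show K + (K + t) = t + 2 * K by ring] at e2
    linarith
  have q_per : Function.Periodic q (4 * K) := fun t => by
    rw [show t + 4 * K = t + 2 * K + 2 * K by ring, q_half, q_half, neg_neg]
  have q_nn : ∀ t (n : ℤ), (4 * (n : ℝ) - 1) * K ≤ t → t ≤ (4 * (n : ℝ) + 1) * K → 0 ≤ q t := by
    intro t n h1 h2
    rw [← q_per.sub_int_mul_eq n]
    set r := t - n * (4 * K) with hr
    rcases le_total 0 r with h | h
    · exact hnn r ⟨h, by linarith⟩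
    · rw [← q_even]
      exact hnn (-r) ⟨by linarith, by linarith⟩
  have q_np : ∀ t (n : ℤ), (4 * (n : ℝ) + 1) * K ≤ t → t ≤ (4 * (n : ℝ) + 3) * K → q t ≤ 0 := by
    intro t n h1 h2
    have := q_half (t - 2 * K)
    rw [sub_add_cancel] at this
    have := q_nn (t - 2 * K) n (by linarith) (by linarith)
    linarith
  have sq1 : Real.sqrt (1 - s l₂ ^ 6) = |q l₂| := by
    rw [← Real.sqrt_sq_eq_abs]; congr 1; linarith [Ls.energy l₂]
  have sq2 : Real.sqrt (1 - c l₁ ^ 6) = |p l₁| := by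
    rw [← Real.sqrt_sq_eq_abs]; congr 1; linarith [Lc.energy l₁]
  rw [Ls.addition Lc hs0, sq1, sq2]
  congr 2
  rcases hdom with ⟨a1, a2, b1, b2⟩ | ⟨a1, a2, b1, b2⟩
  · have hq := q_nn l₂ m (by linarith) (by linarith)
    have hp : p l₁ ≤ 0 := by
      rw [p_eq]; exact q_np _ k (by linarith) (by linarith)
    rw [abs_of_nonneg hq, abs_of_nonpos hp]
    ring
  · have hq := q_np l₂ m (by linarith) (by linarith)
    have hp : 0 ≤ p l₁ := by
      rw [p_eq]; exact q_nn _ (k + 1) (by push_cast; linarith) (by push_cast; linarith)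
    rw [abs_of_nonpos hq, abs_of_nonneg hp]
    ring
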